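/- Let M ≥ 2 be an integer, f : ℤ → ℝ a function with f(n+M) = f(n) for all n ∈ ℤ, and ν ∈ {0,1}. Assume G_f^{(ν)}(k) ≠ 0 for some integer k ≥ 1 and let k_ν be the least such k. For each integer n ≥ 0 set C_n := (−1)^(n+1) · (M^(2n+ν)/(2n+ν+1)) · ∑_{m=1}^{M} f(m) · B_{2n+ν+1}(m/M). Then C_n / [ (−1)^ν · (M/(2π))^(2n+ν+1) · G_f^{(ν)}(k_ν) · (2n+ν)! / (k_ν^(2n+ν+1) · √M) ] → 1 as n → ∞. -/

import Mathlib

/-- The Fourier coefficient `G_f^{(ν)}(k)` of a function `f : ℤ → ℝ` of period `M`. -/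
noncomputable def Gf (M : ℕ) (f : ℤ → ℝ) (ν : ℕ) (k : ℕ) : ℝ :=
  if ν = 0 then
    (2 / Real.sqrt M) * ∑ m ∈ Finset.range M, f m * Real.sin (2 * Real.pi * m * k / M)
  else
    (2 / Real.sqrt M) * ∑ m ∈ Finset.range M, f m * Real.cos (2 * Real.pi * m * k / M)

/-- `C_n = (−1)^(n+1) (M^(2n+ν)/(2n+ν+1)) ∑_{m=1}^M f(m) B_{2n+ν+1}(m/M)`. -/
noncomputable def Cf (M : ℕ) (f : ℤ → ℝ) (ν : ℕ) (n : ℕ) : ℝ :=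
  (-1) ^ (n + 1) * ((M : ℝ) ^ (2 * n + ν) / (2 * n + ν + 1)) *
    ∑ m ∈ Finset.Icc 1 M,
      f m * (((Polynomial.bernoulli (2 * n + ν + 1)).eval ((m : ℚ) / (M : ℚ)) : ℚ) : ℝ)

/-- `D_n = b^(−n) ∑_{k=0}^n C(n,k) a^(n−k) C_k`. -/
noncomputable def Df (M : ℕ) (f : ℤ → ℝ) (ν a b : ℕ) (n : ℕ) : ℝ :=
  ((b : ℝ) ^ n)⁻¹ *
    ∑ k ∈ Finset.range (n + 1), (n.choose k : ℝ) * (a : ℝ) ^ (n - k) * Cf M f ν k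

/-- The unsigned Stirling number of the first kind `s(n,j)`: the coefficient of `X^j`
in `X (X+1) (X+2) ⋯ (X+n−1)`. -/
noncomputable def stirling1 (n j : ℕ) : ℝ :=
  (∏ i ∈ Finset.range n, (Polynomial.X + Polynomial.C (i : ℝ))).coeff j

/-- `ξ(0) = D_0` and `ξ(n) = (1/n!) ∑_{m=0}^{n−1} s(n, n−m) D_{n−m}` for `n ≥ 1`. -/
noncomputable def xif (M : ℕ) (f : ℤ → ℝ) (ν a b : ℕ) : ℕ → ℝ
  | 0 => Df M f ν a b 0
  | n + 1 => (1 / ((n + 1).factorial : ℝ)) *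
      ∑ m ∈ Finset.range (n + 1), stirling1 (n + 1) (n + 1 - m) * Df M f ν a b (n + 1 - m)

/-- The trigonometric function entering `Gf`. -/
noncomputable def trigAux (ν : ℕ) (x : ℝ) : ℝ := if ν = 0 then Real.sin x else Real.cos x

lemma trigAux_abs_le (ν : ℕ) (x : ℝ) : |trigAux ν x| ≤ 1 := by
  unfold trigAux
  split_ifs
  · exact Real.abs_sin_le_one x
  · exact Real.abs_cos_le_one x

lemma Gf_eq_range (M : ℕ) (f : ℤ → ℝ) (ν k : ℕ) :
    Gf M f ν k = (2 / Real.sqrt M) *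
      ∑ m ∈ Finset.range M, f m * trigAux ν (2 * Real.pi * m * k / M) := by
  unfold Gf trigAux
  split_ifs <;> rfl

lemma Gf_eq_Icc (M : ℕ) (hM : 2 ≤ M) (f : ℤ → ℝ) (hf : ∀ n : ℤ, f (n + M) = f n) (ν k : ℕ) :
    Gf M f ν k = (2 / Real.sqrt M) *
      ∑ m ∈ Finset.Icc 1 M, f m * trigAux ν (2 * Real.pi * k * ((m : ℝ) / M)) := by
  rw [Gf_eq_range]
  congr 1
  have hM0 : (M : ℝ) ≠ 0 := by positivity
  have h1 : ∑ m ∈ Finset.Icc 1 M, f m * trigAux ν (2 * Real.pi * k * ((m : ℝ) / M))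
      = ∑ m ∈ Finset.range M, f ((m + 1 : ℕ) : ℤ) *
          trigAux ν (2 * Real.pi * k * (((m + 1 : ℕ) : ℝ) / M)) := by
    rw [Finset.range_eq_Ico, Finset.sum_Ico_add'
      (fun m : ℕ => f (m : ℤ) * trigAux ν (2 * Real.pi * k * ((m : ℝ) / M))) 0 M 1]
    rfl
  have h2 := Finset.sum_range_succ
      (fun m : ℕ => f (m : ℤ) * trigAux ν (2 * Real.pi * k * ((m : ℝ) / M))) M
  have h3 := Finset.sum_range_succ'
      (fun m : ℕ => f (m : ℤ) * trigAux ν (2 * Real.pi * k * ((m : ℝ) / M))) M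
  have h4 : f ((M : ℕ) : ℤ) * trigAux ν (2 * Real.pi * k * ((M : ℝ) / M))
      = f ((0 : ℕ) : ℤ) * trigAux ν (2 * Real.pi * k * (((0 : ℕ) : ℝ) / M)) := by
    have : f (M : ℤ) = f 0 := by simpa using hf 0
    rw [div_self hM0]
    simp only [Nat.cast_zero, this, zero_div, mul_zero, mul_one]
    congr 1
    have e : 2 * Real.pi * (k : ℝ) = k * (2 * Real.pi) := by ring
    unfold trigAux
    split_ifs
    · rw [e]
      have := Real.sin_add_nat_mul_two_pi 0 k
      rwa [zero_add] at this
    · rw [e, Real.cos_nat_mul_two_pi, Real.cos_zero]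
  rw [h1]
  have h5 : ∑ m ∈ Finset.range M, f m * trigAux ν (2 * Real.pi * m * k / M)
      = ∑ m ∈ Finset.range M, f m * trigAux ν (2 * Real.pi * k * ((m : ℝ) / M)) := by
    refine Finset.sum_congr rfl fun m _ => ?_
    congr 2
    ring
  rw [h5]
  linarith

lemma Gf_abs_le (M : ℕ) (f : ℤ → ℝ) (ν k : ℕ) :
    |Gf M f ν k| ≤ (2 / Real.sqrt M) * ∑ m ∈ Finset.range M, |f m| := by
  rw [Gf_eq_range, abs_mul, abs_of_nonneg (by positivity : (0 : ℝ) ≤ 2 / Real.sqrt M)]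
  refine mul_le_mul_of_nonneg_left ?_ (by positivity)
  refine (Finset.abs_sum_le_sum_abs _ _).trans (Finset.sum_le_sum fun m _ => ?_)
  rw [abs_mul]
  exact mul_le_of_le_one_right (abs_nonneg _) (trigAux_abs_le _ _)

lemma hasSum_trigAux (ν : ℕ) (hν : ν = 0 ∨ ν = 1) (n : ℕ) (hn : n ≠ 0) (q : ℚ)
    (hq : (q : ℝ) ∈ Set.Icc (0 : ℝ) 1) :
    HasSum (fun k : ℕ => 1 / (k : ℝ) ^ (2 * n + ν + 1) * trigAux ν (2 * Real.pi * k * q))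
      ((-1 : ℝ) ^ ν * (-1) ^ (n + 1) * (2 * Real.pi) ^ (2 * n + ν + 1) / 2 /
        (2 * n + ν + 1).factorial * (((Polynomial.bernoulli (2 * n + ν + 1)).eval q : ℚ) : ℝ)) := by
  have key : ∀ p : Polynomial ℚ, (Polynomial.map (algebraMap ℚ ℝ) p).eval (q : ℝ)
      = ((p.eval q : ℚ) : ℝ) := fun p => by
    have := Polynomial.eval_map_algebraMap (R := ℚ) p (q : ℝ)
    rw [this]
    exact Polynomial.aeval_algebraMap_apply_eq_algebraMap_eval q p
  rcases hν with rfl | rfl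
  · have h := hasSum_one_div_nat_pow_mul_sin hn hq
    rw [key] at h
    simpa [trigAux] using h
  · have h := hasSum_one_div_nat_pow_mul_cos (Nat.succ_ne_zero n) hq
    rw [key] at h
    have e : 2 * (n + 1) = 2 * n + 1 + 1 := by ring
    simp only [Nat.succ_eq_add_one, e] at h
    have e2 : (-1 : ℝ) ^ 1 * (-1) ^ (n + 1) = (-1) ^ (n + 1 + 1) := by ring
    rw [e2]
    simpa only [trigAux, one_ne_zero, if_false] using h

lemma hasSum_Gf (M : ℕ) (hM : 2 ≤ M) (f : ℤ → ℝ) (hf : ∀ n : ℤ, f (n + M) = f n)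
    (ν : ℕ) (hν : ν = 0 ∨ ν = 1) (n : ℕ) (hn : n ≠ 0) :
    HasSum (fun k : ℕ => Gf M f ν k / (k : ℝ) ^ (2 * n + ν + 1))
      ((-1) ^ ν * Cf M f ν n * (2 * Real.pi / M) ^ (2 * n + ν + 1) * Real.sqrt M /
        (2 * n + ν).factorial) := by
  have hM0 : (0 : ℝ) < M := by positivity
  have h : HasSum (fun k : ℕ => (2 / Real.sqrt M) * ∑ m ∈ Finset.Icc 1 M, f m *
      (1 / (k : ℝ) ^ (2 * n + ν + 1) *
        trigAux ν (2 * Real.pi * k * (((m : ℚ) / (M : ℚ) : ℚ) : ℝ))))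
      ((2 / Real.sqrt M) * ∑ m ∈ Finset.Icc 1 M, f m *
      ((-1 : ℝ) ^ ν * (-1) ^ (n + 1) * (2 * Real.pi) ^ (2 * n + ν + 1) / 2 /
        (2 * n + ν + 1).factorial *
          (((Polynomial.bernoulli (2 * n + ν + 1)).eval ((m : ℚ) / (M : ℚ)) : ℚ) : ℝ))) := by
    refine HasSum.mul_left _ (hasSum_sum fun m hm => HasSum.mul_left _ ?_)
    refine hasSum_trigAux ν hν n hn _ ?_
    rw [Finset.mem_Icc] at hm
    push_cast
    refine ⟨by positivity, ?_⟩
    rw [div_le_one hM0]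
    exact_mod_cast hm.2
  convert h using 1
  · funext k
    rw [Gf_eq_Icc M hM f hf, mul_div_assoc, Finset.sum_div]
    congr 1
    refine Finset.sum_congr rfl fun m _ => ?_
    push_cast
    ring
  · unfold Cf
    have hs : Real.sqrt M * Real.sqrt M = M := Real.mul_self_sqrt hM0.le
    have hs0 : Real.sqrt M ≠ 0 := by positivity
    have hfac : (((2 * n + ν + 1).factorial : ℕ) : ℝ)
        = (2 * n + ν + 1) * ((2 * n + ν).factorial : ℝ) := by
      rw [Nat.factorial_succ]; push_cast; ring
    have e : ∀ (c : ℝ) , ∑ m ∈ Finset.Icc 1 M, f m * (c *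
          (((Polynomial.bernoulli (2 * n + ν + 1)).eval ((m : ℚ) / (M : ℚ)) : ℚ) : ℝ)) =
        c * ∑ m ∈ Finset.Icc 1 M, f m *
          (((Polynomial.bernoulli (2 * n + ν + 1)).eval ((m : ℚ) / (M : ℚ)) : ℚ) : ℝ) := by
      intro c
      rw [Finset.mul_sum]
      exact Finset.sum_congr rfl fun m _ => by ring
    rw [e, hfac]
    generalize ∑ m ∈ Finset.Icc 1 M, f m *
          (((Polynomial.bernoulli (2 * n + ν + 1)).eval ((m : ℚ) / (M : ℚ)) : ℚ) : ℝ) = S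
    have hfp : ((2 * n + ν).factorial : ℝ) ≠ 0 := by positivity
    have hN : (2 * n + ν + 1 : ℝ) ≠ 0 := by positivity
    rw [div_pow, pow_succ (M : ℝ)]
    generalize ((2 * n + ν).factorial : ℝ) = F at *
    generalize (2 * n + ν + 1 : ℝ) = N at *
    have hMp : (M : ℝ) ^ (2 * n + ν) ≠ 0 := by positivity
    generalize (M : ℝ) ^ (2 * n + ν) = P at *
    generalize (2 * Real.pi) ^ (2 * n + ν + 1) = Q at *
    generalize Real.sqrt M = s at *
    field_simp
    linear_combination S * Q * hs

/-- `C_n ~ (−1)^ν (M/(2π))^(2n+ν+1) G_f^{(ν)}(k_ν) (2n+ν)!/(k_ν^(2n+ν+1) √M)`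
as `n → ∞`, where `k_ν` is the least `k ≥ 1` with `G_f^{(ν)}(k) ≠ 0`. -/
theorem Cf_asymptotic (M : ℕ) (hM : 2 ≤ M) (f : ℤ → ℝ)
    (hf : ∀ n : ℤ, f (n + M) = f n) (ν : ℕ) (hν : ν = 0 ∨ ν = 1)
    (kν : ℕ) (hkν : 1 ≤ kν) (hG : Gf M f ν kν ≠ 0)
    (hmin : ∀ j : ℕ, 1 ≤ j → j < kν → Gf M f ν j = 0) :
    Filter.Tendsto
      (fun n : ℕ => Cf M f ν n /
        ((-1) ^ ν * ((M : ℝ) / (2 * Real.pi)) ^ (2 * n + ν + 1) * Gf M f ν kν *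
          ((2 * n + ν).factorial : ℝ) / ((kν : ℝ) ^ (2 * n + ν + 1) * Real.sqrt M)))
      Filter.atTop (nhds 1) := by
  have hM0 : (0 : ℝ) < M := by positivity
  have hk0 : (0 : ℝ) < kν := by exact_mod_cast hkν
  set G := Gf M f ν kν with hGdef
  set B := (2 / Real.sqrt M) * ∑ m ∈ Finset.range M, |f m| with hB
  have hB0 : 0 ≤ B := (abs_nonneg _).trans (Gf_abs_le M f ν 0)
  have hlim : Filter.Tendsto
      (fun n : ℕ => ∑' k : ℕ, Gf M f ν k / G * ((kν : ℝ) / k) ^ (2 * n + ν + 1))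
      Filter.atTop (nhds (∑' k : ℕ, if k = kν then (1 : ℝ) else 0)) := by
    refine tendsto_tsum_of_dominated_convergence
      (bound := fun k : ℕ => B / |G| * (kν : ℝ) ^ 2 * (1 / (k : ℝ) ^ 2)) ?_ ?_ ?_
    · exact (Real.summable_one_div_nat_pow.mpr (by norm_num)).mul_left _
    · intro k
      rcases lt_trichotomy k kν with hlt | rfl | hgt
      · rw [if_neg hlt.ne]
        refine tendsto_const_nhds.congr fun n => ?_
        rcases Nat.eq_zero_or_pos k with rfl | hpos
        · simp
        · rw [hmin k hpos hlt]; simp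
      · rw [if_pos rfl]
        refine tendsto_const_nhds.congr fun n => ?_
        rw [div_self hk0.ne', div_self hG]; simp
      · rw [if_neg hgt.ne']
        have hk1 : (kν : ℝ) < k := by exact_mod_cast hgt
        have hr : (kν : ℝ) / k < 1 := by rw [div_lt_one (hk0.trans hk1)]; exact hk1
        have ht := tendsto_pow_atTop_nhds_zero_of_lt_one
          (by positivity : (0 : ℝ) ≤ (kν : ℝ) / k) hr
        have hsub : Filter.Tendsto (fun n : ℕ => 2 * n + ν + 1) Filter.atTop Filter.atTop :=
          Filter.tendsto_atTop_mono (fun n => by simp only [id]; omega) Filter.tendsto_id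
        simpa using (ht.comp hsub).const_mul (Gf M f ν k / G)
    · filter_upwards [Filter.eventually_ge_atTop 1] with n hn k
      have hbn : 0 ≤ B / |G| * (kν : ℝ) ^ 2 * (1 / (k : ℝ) ^ 2) := by positivity
      rcases lt_or_ge k kν with hlt | hge
      · rcases Nat.eq_zero_or_pos k with rfl | hpos
        · simp
        · rw [hmin k hpos hlt]; simpa using hbn
      · have hk1 : (kν : ℝ) ≤ k := by exact_mod_cast hge
        have hr : (kν : ℝ) / k ≤ 1 := by rw [div_le_one (hk0.trans_le hk1)]; exact hk1
        rw [Real.norm_eq_abs, abs_mul, abs_div, abs_pow,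
          abs_of_nonneg (by positivity : (0 : ℝ) ≤ (kν : ℝ) / k)]
        calc |Gf M f ν k| / |G| * ((kν : ℝ) / k) ^ (2 * n + ν + 1)
            ≤ B / |G| * ((kν : ℝ) / k) ^ 2 := by
              refine mul_le_mul ?_ ?_ (by positivity) (by positivity)
              · exact div_le_div_of_nonneg_right (Gf_abs_le M f ν k) (abs_nonneg _)
              · exact pow_le_pow_of_le_one (by positivity) hr (by omega)
          _ = _ := by rw [div_pow]; ring
  rw [tsum_ite_eq] at hlim
  refine hlim.congr' ?_
  filter_upwards [Filter.eventually_ge_atTop 1] with n hn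
  have h := (hasSum_Gf M hM f hf ν hν n (by omega)).mul_left ((kν : ℝ) ^ (2 * n + ν + 1) / G)
  have h2 : (fun k : ℕ => Gf M f ν k / G * ((kν : ℝ) / k) ^ (2 * n + ν + 1)) =
      fun k : ℕ => (kν : ℝ) ^ (2 * n + ν + 1) / G * (Gf M f ν k / (k : ℝ) ^ (2 * n + ν + 1)) := by
    funext k
    rw [div_pow]; ring
  rw [h2, h.tsum_eq]
  have hs0 : Real.sqrt M ≠ 0 := by positivity
  have hpi := Real.pi_pos
  have hfp : ((2 * n + ν).factorial : ℝ) ≠ 0 := by positivity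
  have hsg : ((-1 : ℝ) ^ ν) * (-1) ^ ν = 1 := by rw [← mul_pow]; simp
  have hsg0 : ((-1 : ℝ) ^ ν) ≠ 0 := by intro h; simp [h] at hsg
  have hinv : ((-1 : ℝ) ^ ν)⁻¹ = (-1) ^ ν := inv_eq_of_mul_eq_one_left hsg
  rw [div_pow, div_pow]
  generalize Cf M f ν n = C
  have hMp : (M : ℝ) ^ (2 * n + ν + 1) ≠ 0 := by positivity
  have hkp : (kν : ℝ) ^ (2 * n + ν + 1) ≠ 0 := by positivity
  have hQ : (2 * Real.pi) ^ (2 * n + ν + 1) ≠ 0 := by positivity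
  generalize (M : ℝ) ^ (2 * n + ν + 1) = P at *
  generalize (kν : ℝ) ^ (2 * n + ν + 1) = K at *
  generalize (2 * Real.pi) ^ (2 * n + ν + 1) = Q at *
  generalize ((2 * n + ν).factorial : ℝ) = F at *
  generalize ((-1 : ℝ) ^ ν) = σ at *
  field_simp
  linear_combination C * hsg
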